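/- There exists a universal constant C such that for every a ≥ π with μ = √(1 − π²/a²) ≥ 1/2, all x, r ∈ (0,a) and every t > 0, one has ∫_r^a 𝔭_t(x,y) dy = (2π(1+μr)·e^{μ(a−r)}/a³)·w_Z(x)·(1 + err) for some real err with |err| ≤ E_{t/a²} + C·(1 + E_{t/a²})·((1+r)/a)². -/

import Mathlib

open Real MeasureTheory Set Filter

/-- Transition density of Brownian motion killed upon exiting `(0,a)`. -/
noncomputable def pker (a t x y : ℝ) : ℝ :=
  (2/a) * ∑' n : ℕ, Real.exp (-(π^2) * ((n : ℝ) + 1)^2 * t / (2 * a^2)) *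
    Real.sin (π * ((n : ℝ) + 1) * x / a) * Real.sin (π * ((n : ℝ) + 1) * y / a)

/-- `μ = √(1 − π²/a²)`. -/
noncomputable def muFn (a : ℝ) : ℝ := Real.sqrt (1 - π^2 / a^2)

/-- `w_Z(x) = a·e^{μ(x−a)}·sin(πx/a)`. -/
noncomputable def wZ (a x : ℝ) : ℝ := a * Real.exp (muFn a * (x - a)) * Real.sin (π * x / a)

/-- Density of the branching Brownian motion with drift `−μ` before absorption. -/
noncomputable def pdens (a t x y : ℝ) : ℝ :=
  Real.exp (muFn a * (x - y) + π^2 * t / (2 * a^2)) * pker a t x y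

/-- `E_t = π²·∑_{n≥2} n²·exp(−π²(n²−1)t/2)`. -/
noncomputable def Efun (t : ℝ) : ℝ :=
  π^2 * ∑' n : ℕ, ((n : ℝ) + 2)^2 * Real.exp (-(π^2) * (((n : ℝ) + 2)^2 - 1) * t / 2)

/-!
After rescaling space by `π / a` and time by `a ^ 2`, the kernel `𝔭_t(x, y)` is, up to the factor
`(2 / a) * exp (μ * (x - y))`, the series `∑ n ≥ 1` of
`exp (-π² (n² - 1) s / 2) * sin (n θ) * sin (n φ)` with `s = t / a ^ 2`. Since
`|sin (n θ)| ≤ n * |sin θ|`, all modes `n ≥ 2` together are at most `E_s` times the first one, so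
`𝔭_t(x, y)` is `w_Z(x) * h(y)` up to a relative error `E_s`, where
`h(y) = (2 / a ^ 2) * exp (μ * (a - y)) * sin (π * y / a)`.

Because `μ ^ 2 + (π / a) ^ 2 = 1`, the integral of `h` over `[r, a]` is explicit: with `k = π / a`
it is `2π * exp (μ * (a - r)) / a ^ 3` times `μ * sin (k r) / k + cos (k r) + exp (-μ * (a - r))`.
The first two terms are `(1 + μ r) * (1 + O((r / a) ^ 2))`. The last one is `O(((1 + r) / a) ^ 2)`:
if `μ ≥ 1 / 2` it decays exponentially in `a - r`, and if `μ < 1 / 2` then `a` is bounded.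
-/

section Elementary

lemma abs_sin_nat_mul_le (n : ℕ) (x : ℝ) : |sin (n * x)| ≤ n * |sin x| := by
  induction n with
  | zero => simp
  | succ k ih =>
    calc |sin ((k + 1 : ℕ) * x)|
        = |sin (k * x) * cos x + cos (k * x) * sin x| := by
          rw [← sin_add, Nat.cast_succ, add_one_mul]
      _ ≤ |sin (k * x)| * |cos x| + |cos (k * x)| * |sin x| := by
          simpa only [abs_mul] using abs_add_le (sin (k * x) * cos x) (cos (k * x) * sin x)
      _ ≤ |sin (k * x)| * 1 + 1 * |sin x| := by gcongr <;> exact abs_cos_le_one _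
      _ ≤ (k + 1 : ℕ) * |sin x| := by push_cast; linarith

lemma abs_sin_nat_mul_mul_sin_nat_mul_le (n : ℕ) (x y : ℝ) :
    |sin (n * x) * sin (n * y)| ≤ n ^ 2 * |sin x * sin y| :=
  calc |sin (n * x) * sin (n * y)| = |sin (n * x)| * |sin (n * y)| := abs_mul _ _
    _ ≤ (n * |sin x|) * (n * |sin y|) := by gcongr <;> exact abs_sin_nat_mul_le _ _
    _ = n ^ 2 * |sin x * sin y| := by rw [abs_mul]; ring

lemma sin_pi_mul_div_nonneg {a y : ℝ} (hy : y ∈ Icc 0 a) : 0 ≤ sin (π * y / a) := by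
  have ha : 0 ≤ a := hy.1.trans hy.2
  refine sin_nonneg_of_nonneg_of_le_pi (by have := hy.1; positivity) ?_
  rw [mul_div_assoc]
  exact mul_le_of_le_one_right pi_pos.le (div_le_one_of_le₀ hy.2 ha)

lemma abs_sin_mul_div_sub_le {k : ℝ} (hk : k ≠ 0) (r : ℝ) :
    |sin (k * r) / k - r| ≤ |r| * ((k * r) ^ 2 / 6) :=
  calc |sin (k * r) / k - r| = |k * r - sin (k * r)| / |k| := by
        rw [← abs_div, ← abs_neg]; congr 1; field_simp; ring
    _ ≤ |k * r| ^ 3 / 6 / |k| := by gcongr; exact abs_sub_sin_le _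
    _ = |r| * ((k * r) ^ 2 / 6) := by
        have : |k| ≠ 0 := abs_ne_zero.mpr hk
        rw [← sq_abs (k * r), abs_mul]; field_simp

lemma abs_cos_sub_one_le (x : ℝ) : |cos x - 1| ≤ x ^ 2 / 2 := by
  rw [abs_le]
  constructor <;> nlinarith [one_sub_sq_div_two_le_cos (x := x), cos_le_one x]

lemma abs_mul_sin_div_add_cos_sub_le {m k r : ℝ} (hm : 0 ≤ m) (hk : k ≠ 0) (hr : 0 ≤ r) :
    |m * (sin (k * r) / k) + cos (k * r) - (1 + m * r)| ≤ (1 + m * r) * ((k * r) ^ 2 / 2) :=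
  calc |m * (sin (k * r) / k) + cos (k * r) - (1 + m * r)|
      = |m * (sin (k * r) / k - r) + (cos (k * r) - 1)| := by ring_nf
    _ ≤ m * |sin (k * r) / k - r| + |cos (k * r) - 1| := by
        simpa only [abs_mul, abs_of_nonneg hm] using
          abs_add_le (m * (sin (k * r) / k - r)) (cos (k * r) - 1)
    _ ≤ m * (r * ((k * r) ^ 2 / 6)) + (k * r) ^ 2 / 2 := by
        gcongr
        · simpa only [abs_of_nonneg hr] using abs_sin_mul_div_sub_le hk r
        · exact abs_cos_sub_one_le _
    _ ≤ (1 + m * r) * ((k * r) ^ 2 / 2) := by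
        have : 0 ≤ m * r * (k * r) ^ 2 := by positivity
        linarith

lemma exp_neg_half_sub_le {a r : ℝ} (ha : 0 < a) (hr : 0 ≤ r) (hra : r ≤ a) :
    exp (-((a - r) / 2)) ≤ 16 * ((1 + r) / a) ^ 2 := by
  have hle : a ≤ 4 * (1 + r) * ((a - r) / 4 + 1) := by nlinarith
  have hexp : exp (-((a - r) / 4)) ≤ 4 * ((1 + r) / a) := by
    rw [exp_neg, inv_le_iff_one_le_mul₀ (exp_pos _), ← mul_div_assoc, div_mul_eq_mul_div,
      one_le_div ha]
    exact hle.trans (by gcongr; exact add_one_le_exp _)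
  calc exp (-((a - r) / 2)) = exp (-((a - r) / 4)) ^ 2 := by
        rw [← exp_nat_mul]; congr 1; push_cast; ring
    _ ≤ (4 * ((1 + r) / a)) ^ 2 := by gcongr
    _ = 16 * ((1 + r) / a) ^ 2 := by ring

lemma mul_integral_exp_mul_sin (m k c b d : ℝ) :
    (m ^ 2 + k ^ 2) * ∫ y in b..d, exp (m * (c - y)) * sin (k * y) =
      exp (m * (c - b)) * (m * sin (k * b) + k * cos (k * b)) -
        exp (m * (c - d)) * (m * sin (k * d) + k * cos (k * d)) := by
  have hderiv (y : ℝ) : HasDerivAt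
      (fun y => -(exp (m * (c - y)) * (m * sin (k * y) + k * cos (k * y))))
      ((m ^ 2 + k ^ 2) * (exp (m * (c - y)) * sin (k * y))) y := by
    have hexp : HasDerivAt (fun y => m * (c - y)) (-m) y := by
      simpa using ((hasDerivAt_id y).const_sub c).const_mul m
    have htrig : HasDerivAt (fun y => k * y) k y := by simpa using (hasDerivAt_id y).const_mul k
    refine (hexp.exp.fun_mul
      ((htrig.sin.const_mul m).fun_add (htrig.cos.const_mul k))).fun_neg.congr_deriv ?_
    ring
  rw [← intervalIntegral.integral_const_mul,
    intervalIntegral.integral_eq_sub_of_hasDerivAt (fun y _ => hderiv y)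
      (Continuous.intervalIntegrable (by fun_prop) _ _)]
  ring

lemma exists_eq_mul_one_add {I T ε : ℝ} (hε : 0 ≤ ε) (h : |I - T| ≤ ε * |T|) :
    ∃ err : ℝ, I = T * (1 + err) ∧ |err| ≤ ε := by
  refine ⟨(I - T) / T, ?_, ?_⟩
  · rcases eq_or_ne T 0 with rfl | hT
    · simpa using h
    · field_simp; ring
  · rw [abs_div]
    exact div_le_of_le_mul₀ (abs_nonneg _) hε h

end Elementary

section SineKernel

/-- The decay at time `s` of the `n`-th Dirichlet mode of `(0, 1)` relative to the first one; it is
the exponential weight in the series `Efun s`. -/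
noncomputable def modeDecay (s : ℝ) (n : ℕ) : ℝ := exp (-(π ^ 2 * ((n : ℝ) ^ 2 - 1) * s / 2))

/-- The killed heat kernel in rescaled angular variables `θ = π x / a`, `φ = π y / a` and time
`s = t / a ^ 2`, normalized so that its first mode `sin θ * sin φ` does not decay. The summation
index is shifted by one, since modes are numbered from `1`. -/
noncomputable def sineKernel (s θ φ : ℝ) : ℝ :=
  ∑' n : ℕ, modeDecay s (n + 1) * (sin ((n + 1 : ℕ) * θ) * sin ((n + 1 : ℕ) * φ))

lemma modeDecay_one (s : ℝ) : modeDecay s 1 = 1 := by simp [modeDecay]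

lemma modeDecay_pos (s : ℝ) (n : ℕ) : 0 < modeDecay s n := exp_pos _

lemma Efun_eq_tsum_modeDecay (s : ℝ) :
    Efun s = π ^ 2 * ∑' n : ℕ, ((n + 2 : ℕ) : ℝ) ^ 2 * modeDecay s (n + 2) := by
  simp only [Efun, modeDecay, Nat.cast_add, Nat.cast_ofNat, neg_mul, neg_div]

lemma tsum_sq_mul_modeDecay_nonneg (s : ℝ) :
    0 ≤ ∑' n : ℕ, ((n + 2 : ℕ) : ℝ) ^ 2 * modeDecay s (n + 2) :=
  tsum_nonneg fun _ => mul_nonneg (sq_nonneg _) (modeDecay_pos s _).le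

lemma Efun_nonneg (s : ℝ) : 0 ≤ Efun s := by
  rw [Efun_eq_tsum_modeDecay]
  exact mul_nonneg (sq_nonneg π) (tsum_sq_mul_modeDecay_nonneg s)

lemma tsum_sq_mul_modeDecay_le_Efun (s : ℝ) :
    ∑' n : ℕ, ((n + 2 : ℕ) : ℝ) ^ 2 * modeDecay s (n + 2) ≤ Efun s := by
  rw [Efun_eq_tsum_modeDecay]
  exact le_mul_of_one_le_left (tsum_sq_mul_modeDecay_nonneg s)
    (one_le_pow₀ (by linarith [pi_gt_three]))

variable {s : ℝ}

lemma summable_sq_mul_modeDecay (hs : 0 < s) :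
    Summable fun n : ℕ => (n : ℝ) ^ 2 * modeDecay s n := by
  have hs' : 0 < π * s / 2 := by positivity
  refine ((HurwitzKernelBounds.summable_f_nat 2 0 hs').mul_right (exp (π ^ 2 * s / 2))).congr ?_
  intro n
  rw [HurwitzKernelBounds.f_nat, modeDecay, add_zero, mul_assoc, ← exp_add]
  congr 2
  ring

lemma norm_modeDecay_mul_sin_mul_sin_le (n : ℕ) (θ φ : ℝ) :
    ‖modeDecay s n * (sin (n * θ) * sin (n * φ))‖ ≤
      (n : ℝ) ^ 2 * modeDecay s n * |sin θ * sin φ| :=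
  calc ‖modeDecay s n * (sin (n * θ) * sin (n * φ))‖
      = modeDecay s n * |sin (n * θ) * sin (n * φ)| := by
        rw [norm_mul, norm_of_nonneg (modeDecay_pos s n).le, norm_eq_abs]
    _ ≤ modeDecay s n * (n ^ 2 * |sin θ * sin φ|) := by
        gcongr
        · exact (modeDecay_pos s n).le
        · exact abs_sin_nat_mul_mul_sin_nat_mul_le n θ φ
    _ = (n : ℝ) ^ 2 * modeDecay s n * |sin θ * sin φ| := by ring

lemma summable_modeDecay_mul_sin_mul_sin (hs : 0 < s) (θ φ : ℝ) :
    Summable fun n : ℕ => modeDecay s n * (sin (n * θ) * sin (n * φ)) :=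
  .of_norm_bounded ((summable_sq_mul_modeDecay hs).mul_right _)
    fun n => norm_modeDecay_mul_sin_mul_sin_le n θ φ

lemma continuous_sineKernel (hs : 0 < s) (θ : ℝ) : Continuous (sineKernel s θ) := by
  refine continuous_tsum (fun _ => by fun_prop)
    ((summable_nat_add_iff 1).mpr (summable_sq_mul_modeDecay hs)) fun n φ => ?_
  refine (norm_modeDecay_mul_sin_mul_sin_le (n + 1) θ φ).trans
    (mul_le_of_le_one_right (mul_nonneg (sq_nonneg _) (modeDecay_pos s _).le) ?_)
  rw [abs_mul]
  exact mul_le_one₀ (abs_sin_le_one θ) (abs_nonneg _) (abs_sin_le_one φ)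

lemma sineKernel_eq_add_tsum (hs : 0 < s) (θ φ : ℝ) :
    sineKernel s θ φ = sin θ * sin φ +
      ∑' n : ℕ, modeDecay s (n + 2) * (sin ((n + 2 : ℕ) * θ) * sin ((n + 2 : ℕ) * φ)) := by
  rw [sineKernel, ((summable_nat_add_iff 1).mpr
    (summable_modeDecay_mul_sin_mul_sin hs θ φ)).tsum_eq_zero_add]
  simp only [zero_add, modeDecay_one, Nat.cast_one, one_mul, add_assoc, one_add_one_eq_two]

lemma abs_sineKernel_sub_le (hs : 0 < s) (θ φ : ℝ) :
    |sineKernel s θ φ - sin θ * sin φ| ≤ Efun s * |sin θ * sin φ| := by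
  rw [sineKernel_eq_add_tsum hs, add_sub_cancel_left, ← norm_eq_abs]
  calc _ ≤ (∑' n : ℕ, ((n + 2 : ℕ) : ℝ) ^ 2 * modeDecay s (n + 2)) * |sin θ * sin φ| :=
        tsum_of_norm_bounded
          (((summable_nat_add_iff 2).mpr (summable_sq_mul_modeDecay hs)).hasSum.mul_right _)
          fun n => norm_modeDecay_mul_sin_mul_sin_le (n + 2) θ φ
    _ ≤ Efun s * |sin θ * sin φ| := by
        gcongr
        exact tsum_sq_mul_modeDecay_le_Efun s

end SineKernel

section Drift

variable {a : ℝ}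

lemma muFn_sq_add (ha : π ≤ a) : muFn a ^ 2 + (π / a) ^ 2 = 1 := by
  have hpi : π ^ 2 / a ^ 2 ≤ 1 := by
    rw [← div_pow]
    exact pow_le_one₀ (div_nonneg pi_pos.le (pi_pos.le.trans ha))
      (div_le_one_of_le₀ ha (pi_pos.le.trans ha))
  rw [muFn, sq_sqrt (sub_nonneg.mpr hpi), div_pow, sub_add_cancel]

lemma muFn_nonneg (a : ℝ) : 0 ≤ muFn a := sqrt_nonneg _

lemma sq_le_sixteen_of_muFn_le (ha : π ≤ a) (hμ : muFn a ≤ 1 / 2) : a ^ 2 ≤ 16 := by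
  have ha0 : 0 < a := pi_pos.trans_le ha
  have hpi : 3 / 4 ≤ (π / a) ^ 2 := by nlinarith [muFn_sq_add ha, muFn_nonneg a]
  rw [div_pow, le_div_iff₀ (by positivity)] at hpi
  nlinarith [pi_lt_d2, pi_pos]

lemma exp_neg_muFn_mul_sub_le {r : ℝ} (ha : π ≤ a) (hr : r ∈ Icc 0 a) :
    exp (-(muFn a * (a - r))) ≤ 16 * ((1 + r) / a) ^ 2 := by
  have ha0 : 0 < a := pi_pos.trans_le ha
  have hra : 0 ≤ a - r := sub_nonneg.mpr hr.2
  rcases le_total (muFn a) (1 / 2) with hμ | hμ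
  · have hsq : 1 ≤ (1 + r) ^ 2 := one_le_pow₀ (by linarith [hr.1])
    calc exp (-(muFn a * (a - r))) ≤ 1 :=
          exp_le_one_iff.mpr (neg_nonpos.mpr (mul_nonneg (muFn_nonneg a) hra))
      _ ≤ 16 * ((1 + r) / a) ^ 2 := by
          rw [div_pow, ← mul_div_assoc, one_le_div (by positivity)]
          linarith [sq_le_sixteen_of_muFn_le ha hμ]
  · calc exp (-(muFn a * (a - r))) ≤ exp (-((a - r) / 2)) := exp_le_exp.mpr (by nlinarith)
      _ ≤ 16 * ((1 + r) / a) ^ 2 := exp_neg_half_sub_le ha0 hr.1 hr.2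

lemma sq_pi_div_mul_le {a r : ℝ} (ha : 0 < a) (hr : 0 ≤ r) :
    (π / a * r) ^ 2 ≤ 10 * ((1 + r) / a) ^ 2 := by
  have hpi : π ^ 2 ≤ 10 := by nlinarith [pi_lt_d2, pi_pos]
  calc (π / a * r) ^ 2 = π ^ 2 * (r / a) ^ 2 := by ring
    _ ≤ 10 * ((1 + r) / a) ^ 2 := by gcongr; linarith

lemma abs_mul_sin_div_add_cos_add_exp_sub_le {r : ℝ} (ha : π ≤ a) (hr : r ∈ Icc 0 a) :
    |muFn a * (sin (π / a * r) / (π / a)) + cos (π / a * r) + exp (-(muFn a * (a - r))) -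
        (1 + muFn a * r)| ≤ 21 * ((1 + r) / a) ^ 2 * (1 + muFn a * r) := by
  have ha0 : 0 < a := pi_pos.trans_le ha
  have hμ := muFn_nonneg a
  have hμr : 0 ≤ muFn a * r := mul_nonneg hμ hr.1
  have htrig := abs_mul_sin_div_add_cos_sub_le hμ (div_pos pi_pos ha0).ne' hr.1
  have hangle := sq_pi_div_mul_le ha0 hr.1
  have hexp := exp_neg_muFn_mul_sub_le ha hr
  set A := muFn a * (sin (π / a * r) / (π / a)) + cos (π / a * r)
  set e := exp (-(muFn a * (a - r)))
  set q := ((1 + r) / a) ^ 2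
  have he : |e| = e := abs_of_pos (exp_pos _)
  calc |A + e - (1 + muFn a * r)| ≤ |A - (1 + muFn a * r)| + e := by
        rw [add_sub_right_comm]; exact (abs_add_le _ _).trans_eq (by rw [he])
    _ ≤ (1 + muFn a * r) * (10 * q / 2) + 16 * q := by
        gcongr
        exact htrig.trans (by gcongr)
    _ ≤ 21 * q * (1 + muFn a * r) := by
        have : 0 ≤ q * (muFn a * r) := by positivity
        linarith

end Drift

section Profile

variable {a r t : ℝ}

/-- The long-time spatial profile `h` of the process: `w_Z(x) * h(y)` is the contribution of the
first Dirichlet mode to the density `𝔭_t(x, y)`. -/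
noncomputable def stationaryProfile (a y : ℝ) : ℝ :=
  2 / a ^ 2 * (exp (muFn a * (a - y)) * sin (π * y / a))

lemma continuous_stationaryProfile (a : ℝ) : Continuous (stationaryProfile a) := by
  unfold stationaryProfile
  fun_prop

lemma stationaryProfile_nonneg {y : ℝ} (hy : y ∈ Icc 0 a) : 0 ≤ stationaryProfile a y := by
  have := sin_pi_mul_div_nonneg hy
  unfold stationaryProfile
  positivity

lemma wZ_mul_stationaryProfile (a x y : ℝ) :
    wZ a x * stationaryProfile a y =
      2 / a * exp (muFn a * (x - y)) * (sin (π * x / a) * sin (π * y / a)) := by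
  have hexp : exp (muFn a * (x - y)) = exp (muFn a * (x - a)) * exp (muFn a * (a - y)) := by
    rw [← exp_add]; ring_nf
  rcases eq_or_ne a 0 with rfl | ha
  · simp [wZ, stationaryProfile]
  · rw [hexp, wZ, stationaryProfile]
    field_simp

lemma pdens_eq_sineKernel (a t x y : ℝ) :
    pdens a t x y =
      2 / a * exp (muFn a * (x - y)) * sineKernel (t / a ^ 2) (π * x / a) (π * y / a) := by
  have hmode (n : ℕ) :
      exp (π ^ 2 * t / (2 * a ^ 2)) * exp (-(π ^ 2) * ((n : ℝ) + 1) ^ 2 * t / (2 * a ^ 2)) =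
        modeDecay (t / a ^ 2) (n + 1) := by
    rw [modeDecay, ← exp_add, Nat.cast_succ]; ring_nf
  have harg (n : ℕ) (z : ℝ) : π * ((n : ℝ) + 1) * z / a = (n + 1 : ℕ) * (π * z / a) := by
    rw [Nat.cast_succ]; ring
  have hseries : sineKernel (t / a ^ 2) (π * x / a) (π * y / a) =
      exp (π ^ 2 * t / (2 * a ^ 2)) *
        ∑' n : ℕ, exp (-(π ^ 2) * ((n : ℝ) + 1) ^ 2 * t / (2 * a ^ 2)) *
          sin (π * ((n : ℝ) + 1) * x / a) * sin (π * ((n : ℝ) + 1) * y / a) := by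
    rw [sineKernel, ← tsum_mul_left]
    refine tsum_congr fun n => ?_
    rw [← hmode, harg, harg]
    ring
  rw [hseries, pdens, pker, exp_add]
  ring

lemma continuous_pdens (ha : a ≠ 0) (ht : 0 < t) (x : ℝ) : Continuous (pdens a t x) := by
  have hs : 0 < t / a ^ 2 := by positivity
  have hcont := continuous_sineKernel hs (π * x / a)
  simp only [funext (pdens_eq_sineKernel a t x)]
  fun_prop

lemma abs_pdens_sub_wZ_mul_stationaryProfile_le (ha : a ≠ 0) (ht : 0 < t) (x y : ℝ) :
    |pdens a t x y - wZ a x * stationaryProfile a y| ≤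
      Efun (t / a ^ 2) * |wZ a x * stationaryProfile a y| := by
  have hs : 0 < t / a ^ 2 := by positivity
  rw [pdens_eq_sineKernel, wZ_mul_stationaryProfile, ← mul_sub, abs_mul,
    abs_mul _ (_ * _), mul_left_comm]
  gcongr
  exact abs_sineKernel_sub_le hs _ _

lemma abs_integral_pdens_sub_le (hr : r ∈ Icc 0 a) (ha : a ≠ 0) (ht : 0 < t) (x : ℝ) :
    |(∫ y in r..a, pdens a t x y) - wZ a x * ∫ y in r..a, stationaryProfile a y| ≤
      Efun (t / a ^ 2) * (|wZ a x| * ∫ y in r..a, stationaryProfile a y) := by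
  have hprofile := continuous_stationaryProfile a
  have hpdens := continuous_pdens ha ht x
  have hbound (y : ℝ) (hy : y ∈ Ioc r a) : ‖pdens a t x y - wZ a x * stationaryProfile a y‖ ≤
      Efun (t / a ^ 2) * (|wZ a x| * stationaryProfile a y) := by
    have := abs_pdens_sub_wZ_mul_stationaryProfile_le ha ht x y
    rwa [abs_mul, abs_of_nonneg (stationaryProfile_nonneg ⟨hr.1.trans hy.1.le, hy.2⟩)] at this
  simp only [← intervalIntegral.integral_const_mul]
  rw [← intervalIntegral.integral_sub (hpdens.intervalIntegrable _ _)
    ((hprofile.const_mul _).intervalIntegrable _ _)]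
  exact intervalIntegral.norm_integral_le_of_norm_le hr.2 (.of_forall hbound)
    (Continuous.intervalIntegrable (by fun_prop) _ _)

lemma integral_stationaryProfile (ha : π ≤ a) (r : ℝ) :
    ∫ y in r..a, stationaryProfile a y =
      2 * π * exp (muFn a * (a - r)) / a ^ 3 *
        (muFn a * (sin (π / a * r) / (π / a)) + cos (π / a * r) + exp (-(muFn a * (a - r)))) := by
  have ha0 : a ≠ 0 := (pi_pos.trans_le ha).ne'
  have hint := mul_integral_exp_mul_sin (muFn a) (π / a) a r a
  rw [muFn_sq_add ha, one_mul, div_mul_cancel₀ _ ha0, sub_self, mul_zero, exp_zero, sin_pi,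
    cos_pi] at hint
  simp only [stationaryProfile, intervalIntegral.integral_const_mul, mul_div_right_comm π _ a]
  rw [hint, exp_neg]
  field_simp
  ring

lemma abs_integral_stationaryProfile_sub_le (ha : π ≤ a) (hr : r ∈ Icc 0 a) :
    |(∫ y in r..a, stationaryProfile a y) -
        2 * π * (1 + muFn a * r) * exp (muFn a * (a - r)) / a ^ 3| ≤
      21 * ((1 + r) / a) ^ 2 *
        (2 * π * (1 + muFn a * r) * exp (muFn a * (a - r)) / a ^ 3) := by
  have ha0 : 0 < a := pi_pos.trans_le ha
  have hfactor := abs_mul_sin_div_add_cos_add_exp_sub_le ha hr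
  set A := muFn a * (sin (π / a * r) / (π / a)) + cos (π / a * r) + exp (-(muFn a * (a - r)))
  set P := 2 * π * exp (muFn a * (a - r)) / a ^ 3
  have hP : 0 ≤ P := by positivity
  calc _ = |P * (A - (1 + muFn a * r))| := by
        rw [integral_stationaryProfile ha]; congr 1; ring
    _ ≤ P * (21 * ((1 + r) / a) ^ 2 * (1 + muFn a * r)) := by
        rw [abs_mul, abs_of_nonneg hP]; gcongr
    _ = _ := by ring

end Profile

theorem stmt15_general {a r t : ℝ} (ha : π ≤ a) (x : ℝ) (hr : r ∈ Icc 0 a) (ht : 0 < t) :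
    ∃ err : ℝ,
      (∫ y in r..a, pdens a t x y) =
        (2 * π * (1 + muFn a * r) * exp (muFn a * (a - r)) / a ^ 3) * wZ a x * (1 + err) ∧
      |err| ≤ Efun (t / a ^ 2) + 21 * (1 + Efun (t / a ^ 2)) * ((1 + r) / a) ^ 2 := by
  have ha0 : 0 < a := pi_pos.trans_le ha
  have hdens := abs_integral_pdens_sub_le hr ha0.ne' ht x
  have hprofile := abs_integral_stationaryProfile_sub_le ha hr
  have hE := Efun_nonneg (t / a ^ 2)
  have hS : 0 ≤ 2 * π * (1 + muFn a * r) * exp (muFn a * (a - r)) / a ^ 3 := by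
    have := mul_nonneg (muFn_nonneg a) hr.1
    positivity
  refine exists_eq_mul_one_add (by positivity) ?_
  set E := Efun (t / a ^ 2)
  set q := ((1 + r) / a) ^ 2
  set S := 2 * π * (1 + muFn a * r) * exp (muFn a * (a - r)) / a ^ 3
  set M := ∫ y in r..a, stationaryProfile a y
  set w := wZ a x
  calc |(∫ y in r..a, pdens a t x y) - S * w|
      ≤ |(∫ y in r..a, pdens a t x y) - w * M| + |w * M - S * w| := abs_sub_le _ _ _
    _ ≤ E * (|w| * M) + |w| * |M - S| := by
        rw [mul_comm S, ← mul_sub, abs_mul]; gcongr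
    _ ≤ E * (|w| * ((1 + 21 * q) * S)) + |w| * (21 * q * S) := by
        gcongr
        linarith [le_of_abs_le hprofile]
    _ = (E + 21 * (1 + E) * q) * |S * w| := by
        rw [abs_mul, abs_of_nonneg hS]; ring

/-- Expected number of particles in `[r,a]` at time `t`:
`∫_r^a 𝔭_t(x,y) dy = (2π(1+μr)·e^{μ(a−r)}/a³)·w_Z(x)·(1 + err)` with
`|err| ≤ E_{t/a²} + C·(1+E_{t/a²})·((1+r)/a)²`. -/
theorem stmt15 :
    ∃ C : ℝ, 0 < C ∧ ∀ a : ℝ, π ≤ a → (1/2 : ℝ) ≤ muFn a →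
      ∀ x ∈ Set.Ioo (0:ℝ) a, ∀ r ∈ Set.Ioo (0:ℝ) a, ∀ t : ℝ, 0 < t →
      ∃ err : ℝ,
        (∫ y in r..a, pdens a t x y) =
          (2 * π * (1 + muFn a * r) * Real.exp (muFn a * (a - r)) / a^3) *
            wZ a x * (1 + err) ∧
        |err| ≤ Efun (t / a^2) + C * (1 + Efun (t / a^2)) * ((1 + r) / a)^2 := by
  exact ⟨21, by norm_num, fun a ha _ x _ r hr t ht =>
    stmt15_general ha x (Ioo_subset_Icc_self hr) ht⟩
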